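/- (Theorem 1: Rényi-DP of the Measure-Marginals mechanism.) Let 𝒜 be a finite index set of attributes with each Ω_i finite and nonempty, let 𝒞 be a finite collection of subsets of 𝒜, and let (w_C)_{C∈𝒞} be real weights with Σ_{C∈𝒞} w_C² = 1. For a dataset D (a finite multiset of records in ∏_{i∈𝒜} Ω_i), let P_D be the joint distribution of the noisy weighted marginals, namely the product over C ∈ 𝒞 and cells t ∈ Ω_C of Gaussian measures on ℝ with mean w_C · (M_C(D))_t and variance σ², where σ > 0. Then for any dataset D, any record x, and any α > 1, the Rényi divergence of order α satisfies D_α(P_{D+{x}} ‖ P_D) ≤ α / (2σ²). -/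

import Mathlib

open MeasureTheory ProbabilityTheory

/-- The Rényi divergence of order `α` between probability measures `P` and `Q`
(with `P ≪ Q`): `D_α(P‖Q) = (1/(α−1)) · log ∫ (dP/dQ)^α dQ`. -/
noncomputable def renyiDiv {X : Type*} [MeasurableSpace X] (α : ℝ) (P Q : Measure X) : ℝ :=
  (α - 1)⁻¹ * Real.log (∫ x, (P.rnDeriv Q x).toReal ^ α ∂Q)

/-- The marginal on a set of attributes `C`: the vector whose entry at
`t ∈ Ω_C = ∏_{i∈C} Ω_i` counts the records of the dataset `D` whose restriction to `C`
equals `t`. -/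
noncomputable def marginal {A : Type*} [DecidableEq A] {Ω : A → Type*}
    [∀ i, Fintype (Ω i)] [∀ i, DecidableEq (Ω i)] (C : Finset A)
    (D : Multiset ((i : A) → Ω i)) : ((i : C) → Ω i) → ℝ :=
  fun t => (D.countP (fun x => (fun i : C => x i) = t) : ℝ)

/-- The output distribution of the Measure-Marginals mechanism on dataset `D`: the product, over
sets `C ∈ 𝒞` and cells `t ∈ Ω_C`, of Gaussian measures with mean `w_C · (M_C(D))_t` and
variance `σ²`. -/
noncomputable def noisyMarginalsDist {A : Type*} [DecidableEq A] {Ω : A → Type*}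
    [∀ i, Fintype (Ω i)] [∀ i, DecidableEq (Ω i)] (𝒞 : Finset (Finset A))
    (w : Finset A → ℝ) (σ : ℝ) (D : Multiset ((i : A) → Ω i)) :
    Measure ((C : 𝒞) × ((i : (C : Finset A)) → Ω i) → ℝ) :=
  Measure.pi fun p => gaussianReal (w p.1 * marginal (p.1 : Finset A) D p.2) (σ ^ 2).toNNReal

/-!
Rényi divergence is additive over independent coordinates, and for two Gaussians of common
variance `v` whose means differ by `δ` it equals `α δ² / (2v)`. A new record changes exactly one
cell of each marginal `C`, moving its weighted mean by `w C`, so the divergences add up to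
`α (∑ w_C²) / (2σ²)`: the bound is in fact an equality.
-/

open scoped NNReal ENNReal

section ProductMeasure

theorem lintegral_fin_nat_prod_eq_prod {n : ℕ} {X : Fin n → Type*}
    [∀ i, MeasurableSpace (X i)] {μ : ∀ i, Measure (X i)} [∀ i, SigmaFinite (μ i)]
    {f : ∀ i, X i → ℝ≥0∞} (hf : ∀ i, Measurable (f i)) :
    ∫⁻ x, ∏ i, f i (x i) ∂Measure.pi μ = ∏ i, ∫⁻ x, f i x ∂μ i := by
  induction n with
  | zero => simp
  | succ n ih =>
    calc ∫⁻ x, ∏ i, f i (x i) ∂Measure.pi μ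
        = ∫⁻ z : X 0 × (∀ i : Fin n, X i.succ), f 0 z.1 * ∏ i : Fin n, f i.succ (z.2 i)
            ∂(μ 0).prod (Measure.pi fun i => μ i.succ) := by
          rw [← ((measurePreserving_piFinSuccAbove μ 0).symm _).lintegral_comp_emb
            (MeasurableEquiv.measurableEmbedding _)]
          simp only [Fin.prod_univ_succ]
          rfl
      _ = (∫⁻ x, f 0 x ∂μ 0) * ∏ i : Fin n, ∫⁻ x, f i.succ x ∂μ i.succ := by
          have hprod : Measurable fun y : ∀ i : Fin n, X i.succ => ∏ i, f i.succ (y i) := by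
            fun_prop
          rw [← ih fun i => hf i.succ, lintegral_prod_mul (hf 0).aemeasurable hprod.aemeasurable]
      _ = ∏ i, ∫⁻ x, f i x ∂μ i := by rw [Fin.prod_univ_succ]

variable {ι : Type*} [Fintype ι] {X : ι → Type*} [∀ i, MeasurableSpace (X i)]

theorem lintegral_fintype_prod_eq_prod {μ : ∀ i, Measure (X i)} [∀ i, SigmaFinite (μ i)]
    {f : ∀ i, X i → ℝ≥0∞} (hf : ∀ i, Measurable (f i)) :
    ∫⁻ x, ∏ i, f i (x i) ∂Measure.pi μ = ∏ i, ∫⁻ x, f i x ∂μ i := by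
  let e := (Fintype.equivFin ι).symm
  rw [← (measurePreserving_piCongrLeft μ e).lintegral_comp_emb
    (MeasurableEquiv.measurableEmbedding _)]
  simp_rw [← e.prod_comp, MeasurableEquiv.coe_piCongrLeft, Equiv.piCongrLeft_apply_apply]
  exact lintegral_fin_nat_prod_eq_prod fun i => hf (e i)

theorem pi_withDensity {μ : ∀ i, Measure (X i)} [∀ i, SigmaFinite (μ i)]
    {f : ∀ i, X i → ℝ≥0∞} (hf : ∀ i, Measurable (f i))
    [∀ i, SigmaFinite ((μ i).withDensity (f i))] :
    Measure.pi (fun i => (μ i).withDensity (f i)) =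
      (Measure.pi μ).withDensity fun x => ∏ i, f i (x i) := by
  refine Measure.pi_eq fun s hs => ?_
  rw [withDensity_apply _ (MeasurableSet.univ_pi hs), Measure.restrict_pi_pi,
    lintegral_fintype_prod_eq_prod hf]
  exact Finset.prod_congr rfl fun i _ => (withDensity_apply _ (hs i)).symm

theorem rnDeriv_pi {P Q : ∀ i, Measure (X i)} [∀ i, SigmaFinite (P i)] [∀ i, SigmaFinite (Q i)]
    (hPQ : ∀ i, P i ≪ Q i) :
    (Measure.pi P).rnDeriv (Measure.pi Q) =ᵐ[Measure.pi Q]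
      fun x => ∏ i, (P i).rnDeriv (Q i) (x i) := by
  have hP : Measure.pi P =
      (Measure.pi Q).withDensity fun x => ∏ i, (P i).rnDeriv (Q i) (x i) := by
    rw [← pi_withDensity fun i => Measure.measurable_rnDeriv (P i) (Q i)]
    simp only [fun i => Measure.withDensity_rnDeriv_eq (P i) (Q i) (hPQ i)]
  rw [hP]
  exact Measure.rnDeriv_withDensity _ (by fun_prop)

end ProductMeasure

section Renyi

/-- The Hellinger integral `∫ (dP/dQ)^α dQ` of order `α`, whose logarithm, scaled by
`(α - 1)⁻¹`, is the Rényi divergence. Unlike the divergence it is multiplicative over product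
measures without any finiteness assumption. -/
noncomputable def hellingerIntegral {X : Type*} [MeasurableSpace X] (α : ℝ) (P Q : Measure X) :
    ℝ :=
  ∫ x, (P.rnDeriv Q x).toReal ^ α ∂Q

theorem renyiDiv_eq_log_hellingerIntegral {X : Type*} [MeasurableSpace X] (α : ℝ)
    (P Q : Measure X) : renyiDiv α P Q = (α - 1)⁻¹ * Real.log (hellingerIntegral α P Q) :=
  rfl

variable {ι : Type*} [Fintype ι] {X : ι → Type*} [∀ i, MeasurableSpace (X i)]
  {P Q : ∀ i, Measure (X i)} [∀ i, SigmaFinite (P i)] [∀ i, SigmaFinite (Q i)]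

theorem hellingerIntegral_pi (α : ℝ) (hPQ : ∀ i, P i ≪ Q i) :
    hellingerIntegral α (Measure.pi P) (Measure.pi Q) =
      ∏ i, hellingerIntegral α (P i) (Q i) := by
  simp only [hellingerIntegral]
  rw [← integral_fintype_prod_eq_prod fun i x => ((P i).rnDeriv (Q i) x).toReal ^ α]
  refine integral_congr_ae ?_
  filter_upwards [rnDeriv_pi hPQ] with x hx
  rw [hx, ENNReal.toReal_prod, Real.finsetProd_rpow _ _ fun i _ => ENNReal.toReal_nonneg]

theorem renyiDiv_pi {α : ℝ} (hPQ : ∀ i, P i ≪ Q i)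
    (hne : ∀ i, hellingerIntegral α (P i) (Q i) ≠ 0) :
    renyiDiv α (Measure.pi P) (Measure.pi Q) = ∑ i, renyiDiv α (P i) (Q i) := by
  simp only [renyiDiv_eq_log_hellingerIntegral]
  rw [hellingerIntegral_pi α hPQ, Real.log_prod fun i _ => hne i, Finset.mul_sum]

end Renyi

section Gaussian

variable (m m' : ℝ) {v : ℝ≥0}

theorem gaussianReal_eq_withDensity_gaussianReal (hv : v ≠ 0) :
    gaussianReal m' v = (gaussianReal m v).withDensity
      fun x => ENNReal.ofReal (Real.exp (((x - m) ^ 2 - (x - m') ^ 2) / (2 * v))) := by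
  rw [gaussianReal_of_var_ne_zero _ hv, gaussianReal_of_var_ne_zero _ hv,
    ← withDensity_mul _ (measurable_gaussianPDF m v) (by fun_prop)]
  congr 1 with x
  rw [Pi.mul_apply, gaussianPDF, gaussianPDF, ← ENNReal.ofReal_mul (gaussianPDFReal_nonneg _ _ _),
    gaussianPDFReal, gaussianPDFReal, mul_assoc _ (Real.exp _), ← Real.exp_add]
  ring_nf

theorem gaussianReal_absolutelyContinuous_gaussianReal (hv : v ≠ 0) :
    gaussianReal m' v ≪ gaussianReal m v := by
  rw [gaussianReal_eq_withDensity_gaussianReal m m' hv]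
  exact withDensity_absolutelyContinuous _ _

theorem rnDeriv_gaussianReal_gaussianReal (hv : v ≠ 0) :
    (gaussianReal m' v).rnDeriv (gaussianReal m v) =ᵐ[gaussianReal m v]
      fun x => ENNReal.ofReal (Real.exp (((x - m) ^ 2 - (x - m') ^ 2) / (2 * v))) := by
  rw [gaussianReal_eq_withDensity_gaussianReal m m' hv]
  exact Measure.rnDeriv_withDensity _ (by fun_prop)

theorem hellingerIntegral_gaussianReal (hv : v ≠ 0) (α : ℝ) :
    hellingerIntegral α (gaussianReal m' v) (gaussianReal m v) =
      Real.exp (α * (α - 1) * (m' - m) ^ 2 / (2 * v)) := by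
  have hv' : (v : ℝ) ≠ 0 := NNReal.coe_ne_zero.mpr hv
  have hdens : (fun x => ((gaussianReal m' v).rnDeriv (gaussianReal m v) x).toReal ^ α)
      =ᵐ[gaussianReal m v] fun x =>
        Real.exp (α * (m' - m) / v * x) * Real.exp (α * (m ^ 2 - m' ^ 2) / (2 * v)) := by
    filter_upwards [rnDeriv_gaussianReal_gaussianReal m m' hv] with x hx
    rw [hx, ENNReal.toReal_ofReal (Real.exp_pos _).le, ← Real.exp_mul, ← Real.exp_add]
    ring_nf
  have hmgf : ∫ x, Real.exp (α * (m' - m) / v * x) ∂gaussianReal m v =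
      Real.exp (m * (α * (m' - m) / v) + v * (α * (m' - m) / v) ^ 2 / 2) :=
    congrFun mgf_fun_id_gaussianReal _
  rw [hellingerIntegral, integral_congr_ae hdens, integral_mul_const, hmgf, ← Real.exp_add]
  congr 1
  field_simp
  ring

theorem renyiDiv_gaussianReal (hv : v ≠ 0) {α : ℝ} (hα : α ≠ 1) :
    renyiDiv α (gaussianReal m' v) (gaussianReal m v) = α * (m' - m) ^ 2 / (2 * v) := by
  have hα' : α - 1 ≠ 0 := sub_ne_zero.mpr hα
  rw [renyiDiv_eq_log_hellingerIntegral, hellingerIntegral_gaussianReal m m' hv, Real.log_exp]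
  field_simp

end Gaussian

theorem renyiDiv_pi_gaussianReal {ι : Type*} [Fintype ι] (m m' : ι → ℝ) {v : ι → ℝ≥0}
    (hv : ∀ i, v i ≠ 0) {α : ℝ} (hα : α ≠ 1) :
    renyiDiv α (Measure.pi fun i => gaussianReal (m' i) (v i))
      (Measure.pi fun i => gaussianReal (m i) (v i)) =
      ∑ i, α * (m' i - m i) ^ 2 / (2 * v i) := by
  rw [renyiDiv_pi (fun i => gaussianReal_absolutelyContinuous_gaussianReal (m i) (m' i) (hv i))
    fun i => by rw [hellingerIntegral_gaussianReal _ _ (hv i)]; exact Real.exp_ne_zero _]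
  exact Finset.sum_congr rfl fun i _ => renyiDiv_gaussianReal (m i) (m' i) (hv i) hα

section Mechanism

variable {A : Type*} [DecidableEq A] {Ω : A → Type*} [∀ i, Fintype (Ω i)]
  [∀ i, DecidableEq (Ω i)] (D : Multiset ((i : A) → Ω i)) (x : (i : A) → Ω i)

theorem marginal_cons (C : Finset A) :
    marginal C (x ::ₘ D) = marginal C D + Pi.single (C.restrict x) 1 := by
  ext t
  simp only [marginal, Multiset.countP_cons, Pi.add_apply, Pi.single_apply, Finset.restrict_def,
    eq_comm (a := t), Nat.cast_add, Nat.cast_ite, Nat.cast_one, Nat.cast_zero]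

theorem sum_sq_weighted_marginal_cons_sub (C : Finset A) (c : ℝ) :
    ∑ t, (c * marginal C (x ::ₘ D) t - c * marginal C D t) ^ 2 = c ^ 2 := by
  simp only [marginal_cons, Pi.add_apply, ← mul_sub, add_sub_cancel_left, mul_pow,
    ← Finset.mul_sum, Pi.single_apply, ite_pow, one_pow, ne_eq, OfNat.ofNat_ne_zero,
    not_false_eq_true, zero_pow, Finset.sum_ite_eq', Finset.mem_univ, if_true, mul_one]

theorem renyiDP_measure_marginals_general (𝒞 : Finset (Finset A)) (w : Finset A → ℝ) {σ : ℝ}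
    (hσ : σ ≠ 0) {α : ℝ} (hα : α ≠ 1) :
    renyiDiv α (noisyMarginalsDist 𝒞 w σ (x ::ₘ D)) (noisyMarginalsDist 𝒞 w σ D) =
      α * (∑ C ∈ 𝒞, w C ^ 2) / (2 * σ ^ 2) := by
  have hv : (σ ^ 2).toNNReal ≠ 0 := (Real.toNNReal_pos.mpr (by positivity)).ne'
  rw [noisyMarginalsDist, noisyMarginalsDist, renyiDiv_pi_gaussianReal _ _ (fun _ => hv) hα,
    Real.coe_toNNReal _ (sq_nonneg σ), ← Finset.sum_div, ← Finset.mul_sum, Fintype.sum_sigma]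
  simp only [sum_sq_weighted_marginal_cons_sub]
  rw [Finset.sum_coe_sort 𝒞 fun C => w C ^ 2]

end Mechanism

/-- **Theorem 1: Rényi-DP of the Measure-Marginals mechanism.**
If the weights satisfy `Σ_{C∈𝒞} w_C² = 1` and `σ > 0`, then for any dataset `D`, any record
`x` and any `α > 1`, the Rényi divergence of order `α` between the output distributions of the
mechanism on `D + {x}` and on `D` is at most `α / (2σ²)`. -/
theorem renyiDP_measure_marginals {A : Type*} [Fintype A] [DecidableEq A] {Ω : A → Type*}
    [∀ i, Fintype (Ω i)] [∀ i, Nonempty (Ω i)] [∀ i, DecidableEq (Ω i)]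
    (𝒞 : Finset (Finset A)) (w : Finset A → ℝ) (hw : ∑ C ∈ 𝒞, (w C) ^ 2 = 1)
    (σ : ℝ) (hσ : 0 < σ) (D : Multiset ((i : A) → Ω i)) (x : (i : A) → Ω i)
    (α : ℝ) (hα : 1 < α) :
    renyiDiv α (noisyMarginalsDist 𝒞 w σ (x ::ₘ D)) (noisyMarginalsDist 𝒞 w σ D) ≤
      α / (2 * σ ^ 2) := by
  rw [renyiDP_measure_marginals_general D x 𝒞 w hσ.ne' hα.ne', hw, mul_one]
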